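/- arXiv:1104.1843 — 7 statements merged into one kernel-verified Lean document; each statement's English description precedes it below -/
import Mathlib

section
/- Let ρ be as in the context, assumed positive semidefinite with |s| < 1. For the measurement in the computational basis of the second qubit, i.e. B₀ = |0⟩⟨0|, B₁ = |1⟩⟨1|, one has p₀ = Tr[(I⊗B₀)ρ(I⊗B₀)] = (1+s)/2, p₁ = Tr[(I⊗B₁)ρ(I⊗B₁)] = (1−s)/2, and the conditional entropy p₀S(ρ₀) + p₁S(ρ₁), where ρ_k = (I⊗B_k)ρ(I⊗B_k)/p_k, equals S₁ = −[(1+r+s+c₃)/4]log₂[(1+r+s+c₃)/(2(1+s))] − [(1−r+s−c₃)/4]log₂[(1−r+s−c₃)/(2(1+s))] − [(1+r−s−c₃)/4]log₂[(1+r−s−c₃)/(2(1−s))] − [(1−r−s+c₃)/4]log₂[(1−r−s+c₃)/(2(1−s))]. -/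
open Matrix Polynomial
open scoped Kronecker ComplexOrder

noncomputable section

/-- 2×2 complex matrices. -/
abbrev M2 : Type := Matrix (Fin 2) (Fin 2) ℂ
/-- 4×4 complex matrices, indexed by pairs (two-qubit operators). -/
abbrev M4 : Type := Matrix (Fin 2 × Fin 2) (Fin 2 × Fin 2) ℂ

/-- Pauli matrix σ₁. -/
def σ1 : M2 := !![0, 1; 1, 0]
/-- Pauli matrix σ₂. -/
def σ2 : M2 := !![0, -Complex.I; Complex.I, 0]
/-- Pauli matrix σ₃. -/
def σ3 : M2 := !![1, 0; 0, -1]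

/-- f(t) = −((1−t)/2)·log₂(1−t) − ((1+t)/2)·log₂(1+t); the convention
0·log₂0 = 0 is automatic since `Real.logb 2 0 = 0`. -/
def f (t : ℝ) : ℝ :=
  -((1 - t) / 2) * Real.logb 2 (1 - t) - ((1 + t) / 2) * Real.logb 2 (1 + t)

/-- Von Neumann entropy (base 2): −Σ λᵢ log₂ λᵢ over the eigenvalues of `X`
(the roots of the characteristic polynomial, with multiplicity; for a PSD
Hermitian matrix these are the real nonnegative eigenvalues). -/
def entropy {n : Type} [Fintype n] [DecidableEq n] (X : Matrix n n ℂ) : ℝ :=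
  -((X.charpoly.roots.map (fun z => z.re * Real.logb 2 z.re)).sum)

/-- The state ρ = (1/4)[I⊗I + r σ₃⊗I + s I⊗σ₃ + c₁ σ₁⊗σ₁ + c₂ σ₂⊗σ₂ + c₃ σ₃⊗σ₃]. -/
def rho (r s c1 c2 c3 : ℝ) : M4 :=
  (1 / 4 : ℂ) • ((1 : M2) ⊗ₖ (1 : M2) + (r : ℂ) • (σ3 ⊗ₖ (1 : M2))
    + (s : ℂ) • ((1 : M2) ⊗ₖ σ3) + (c1 : ℂ) • (σ1 ⊗ₖ σ1)
    + (c2 : ℂ) • (σ2 ⊗ₖ σ2) + (c3 : ℂ) • (σ3 ⊗ₖ σ3))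

/-- The state after the phase-flip channel:
ε_p(ρ) = (1/4)[I⊗I + r σ₃⊗I + s I⊗σ₃ + (1−p)²c₁ σ₁⊗σ₁ + (1−p)²c₂ σ₂⊗σ₂ + c₃ σ₃⊗σ₃]. -/
def epsRho (p r s c1 c2 c3 : ℝ) : M4 :=
  rho r s ((1 - p) ^ 2 * c1) ((1 - p) ^ 2 * c2) c3

/-- Partial trace over the second qubit. -/
def ptraceB (X : M4) : M2 := Matrix.of fun i j => ∑ k : Fin 2, X (i, k) (j, k)

/-- Partial trace over the first qubit. -/
def ptraceA (X : M4) : M2 := Matrix.of fun i j => ∑ k : Fin 2, X (k, i) (k, j)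

/-- (I⊗B) X (I⊗B): the (unnormalized) post-measurement operator. -/
def measOp (B : M2) (X : M4) : M4 :=
  ((1 : M2) ⊗ₖ B) * X * ((1 : M2) ⊗ₖ B)

/-- p_k = Tr[(I⊗B) X (I⊗B)] (real part). -/
def prob (B : M2) (X : M4) : ℝ := ((measOp B X).trace).re

/-- Conditional entropy p₀ S(ρ₀) + p₁ S(ρ₁) for the projective measurement {B, I−B}
on the second qubit, with ρ_k = (I⊗B_k) X (I⊗B_k) / p_k (with the convention that
a zero-probability outcome contributes 0, since then `(p_k)⁻¹ = 0`). -/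
def condEnt (X : M4) (B : M2) : ℝ :=
  prob B X * entropy (((prob B X : ℝ) : ℂ)⁻¹ • measOp B X)
    + prob (1 - B) X * entropy (((prob (1 - B) X : ℝ) : ℂ)⁻¹ • measOp (1 - B) X)

/-- B is a rank-one orthogonal projection on ℂ². -/
def IsRankOneProj (B : M2) : Prop := B.IsHermitian ∧ B * B = B ∧ B.rank = 1

/-!
Measuring the second qubit in the computational basis keeps only the diagonal blocks
`A_k = ⟨k|ρ|k⟩`: the post-measurement operator is `A_k ⊗ |k⟩⟨k|`, so `p_k = Tr A_k`.
Since `σ₁` and `σ₂` have zero diagonal, the terms with `c₁` and `c₂` drop out of `A_k`, which is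
therefore diagonal. Up to zeros, its diagonal entries `d` are the eigenvalues of `p_k ρ_k`, and
`p_k S(ρ_k)` is the sum of the terms
`-p_k (d / p_k) log₂ (d / p_k) = -d log₂ (d / p_k)`.
-/

section BlockDiag

variable {m o R : Type*}

lemma blockDiag_kronecker [CommMagma R] (A : Matrix m m R) (B : Matrix o o R) (k : o) :
    blockDiag (A ⊗ₖ B) k = B k k • A := by
  ext i j
  exact mul_comm _ _

lemma one_kronecker_single_mul_mul_one_kronecker_single [Semiring R] [Fintype m] [DecidableEq m]
    [Fintype o] [DecidableEq o] (X : Matrix (m × o) (m × o) R) (k : o) :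
    ((1 : Matrix m m R) ⊗ₖ single k k 1) * X * ((1 : Matrix m m R) ⊗ₖ single k k 1) =
      blockDiag X k ⊗ₖ single k k 1 := by
  rw [← diagonal_single, ← diagonal_one, diagonal_kronecker_diagonal]
  ext ⟨i, a⟩ ⟨j, b⟩
  rw [mul_diagonal, diagonal_mul, kronecker_apply, blockDiag_apply]
  by_cases ha : a = k <;> by_cases hb : b = k <;>
    simp [diagonal_apply, ha, hb, Ne.symm]

end BlockDiag

section Entropy

lemma roots_charpoly_diagonal {n R : Type*} [Fintype n] [DecidableEq n] [CommRing R] [IsDomain R]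
    (d : n → R) : (diagonal d).charpoly.roots = Finset.univ.val.map d := by
  rw [charpoly_diagonal, ← roots_multiset_prod_X_sub_C (Finset.univ.val.map d),
    Multiset.map_map]
  rfl

variable {n : Type} [Fintype n] [DecidableEq n]

lemma entropy_diagonal (d : n → ℂ) :
    entropy (diagonal d) = -∑ i, (d i).re * Real.logb 2 (d i).re := by
  rw [entropy, roots_charpoly_diagonal, Multiset.map_map]
  rfl

lemma mul_entropy_inv_smul_diagonal {p : ℝ} (hp : p ≠ 0) (d : n → ℂ) :
    p * entropy ((p : ℂ)⁻¹ • diagonal d) =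
      -∑ i, (d i).re * Real.logb 2 ((d i).re / p) := by
  have normalized_re (i : n) : ((p : ℂ)⁻¹ • d i).re = (d i).re / p := by
    rw [smul_eq_mul, ← Complex.ofReal_inv, Complex.re_ofReal_mul, inv_mul_eq_div]
  rw [← diagonal_smul, entropy_diagonal, mul_neg, Finset.mul_sum]
  simp only [Pi.smul_apply, normalized_re, ← mul_assoc, mul_div_cancel₀ _ hp]

end Entropy

section ComputationalBasis

lemma measOp_single (k : Fin 2) (X : M4) :
    measOp (single k k 1) X = blockDiag X k ⊗ₖ single k k 1 :=
  one_kronecker_single_mul_mul_one_kronecker_single X k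

lemma prob_single (k : Fin 2) (X : M4) :
    prob (single k k 1) X = (blockDiag X k).trace.re := by
  rw [prob, measOp_single, trace_kronecker, trace_single_eq_same, mul_one]

lemma mul_entropy_inv_smul_measOp_single {p : ℝ} (hp : p ≠ 0) {X : M4} {k : Fin 2}
    (hX : (blockDiag X k).IsDiag) :
    p * entropy ((p : ℂ)⁻¹ • measOp (single k k 1) X) =
      -∑ i, (blockDiag X k i i).re * Real.logb 2 ((blockDiag X k i i).re / p) := by
  rw [measOp_single, ← hX.diagonal_diag, ← diagonal_single, diagonal_kronecker_diagonal,
    mul_entropy_inv_smul_diagonal hp, Fintype.sum_prod_type]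
  congr! 2 with i
  rw [Fintype.sum_eq_single k fun a ha => by simp [ha]]
  simp only [Pi.single_eq_same, mul_one, diag_apply, diagonal_apply_eq]

lemma single_zero_zero_one {R : Type*} [Zero R] [One R] :
    (single 0 0 1 : Matrix (Fin 2) (Fin 2) R) = !![1, 0; 0, 0] := by
  ext i j
  fin_cases i <;> fin_cases j <;> simp

lemma one_sub_single_zero_zero_one {R : Type*} [Ring R] :
    (1 : Matrix (Fin 2) (Fin 2) R) - single 0 0 1 = single 1 1 1 := by
  ext i j
  fin_cases i <;> fin_cases j <;> simp

lemma condEnt_single_zero_zero (X : M4) :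
    condEnt X (single 0 0 1) = ∑ k, prob (single k k 1) X *
      entropy ((prob (single k k 1) X : ℂ)⁻¹ • measOp (single k k 1) X) := by
  rw [condEnt, one_sub_single_zero_zero_one, Fin.sum_univ_two]

lemma condEnt_single_zero_zero_of_isDiag {X : M4} (hX : ∀ k, (blockDiag X k).IsDiag)
    (hp : ∀ k, prob (single k k 1) X ≠ 0) :
    condEnt X (single 0 0 1) =
      -∑ k, ∑ i, (blockDiag X k i i).re *
        Real.logb 2 ((blockDiag X k i i).re / prob (single k k 1) X) := by
  rw [condEnt_single_zero_zero, ← Finset.sum_neg_distrib]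
  exact Finset.sum_congr rfl fun k _ => mul_entropy_inv_smul_measOp_single (hp k) (hX k)

end ComputationalBasis

section Rho

lemma isDiag_σ3 : σ3.IsDiag := by
  intro i j hij
  fin_cases i <;> fin_cases j <;> first | rfl | exact absurd rfl hij

lemma re_σ3_zero_zero : (σ3 0 0).re = 1 := rfl

lemma re_σ3_one_one : (σ3 1 1).re = -1 := by simp [σ3]

variable (r s c1 c2 c3 : ℝ)

lemma blockDiag_rho (k : Fin 2) :
    blockDiag (rho r s c1 c2 c3) k =
      (1 / 4 : ℂ) • ((1 + s * σ3 k k) • (1 : M2) + (r + c3 * σ3 k k) • σ3) := by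
  have hσ1 : σ1 k k = 0 := by fin_cases k <;> rfl
  have hσ2 : σ2 k k = 0 := by fin_cases k <;> rfl
  simp only [rho, blockDiag_smul, blockDiag_add, Pi.smul_apply, Pi.add_apply,
    blockDiag_kronecker, hσ1, hσ2, one_apply_eq]
  module

lemma isDiag_blockDiag_rho (k : Fin 2) : (blockDiag (rho r s c1 c2 c3) k).IsDiag := by
  rw [blockDiag_rho]
  exact ((isDiag_one.smul _).add (isDiag_σ3.smul _)).smul _

lemma re_blockDiag_rho_apply_self (k i : Fin 2) :
    (blockDiag (rho r s c1 c2 c3) k i i).re =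
      (1 + (σ3 k k).re * s + (σ3 i i).re * (r + (σ3 k k).re * c3)) / 4 := by
  rw [blockDiag_rho]
  fin_cases k <;> fin_cases i <;> simp [σ3] <;> ring

lemma prob_single_rho (k : Fin 2) :
    prob (single k k 1) (rho r s c1 c2 c3) = (1 + (σ3 k k).re * s) / 2 := by
  rw [prob_single, trace_fin_two, Complex.add_re, re_blockDiag_rho_apply_self,
    re_blockDiag_rho_apply_self, re_σ3_zero_zero, re_σ3_one_one]
  ring

end Rho

theorem stmt1_general (r s c1 c2 c3 : ℝ) (hs₀ : 1 + s ≠ 0) (hs₁ : 1 - s ≠ 0) :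
    prob !![1, 0; 0, 0] (rho r s c1 c2 c3) = (1 + s) / 2 ∧
    prob (1 - !![1, 0; 0, 0]) (rho r s c1 c2 c3) = (1 - s) / 2 ∧
    condEnt (rho r s c1 c2 c3) !![1, 0; 0, 0] =
      (-((1 + r + s + c3) / 4 * Real.logb 2 ((1 + r + s + c3) / (2 * (1 + s))))
        - (1 - r + s - c3) / 4 * Real.logb 2 ((1 - r + s - c3) / (2 * (1 + s)))
        - (1 + r - s - c3) / 4 * Real.logb 2 ((1 + r - s - c3) / (2 * (1 - s)))
        - (1 - r - s + c3) / 4 * Real.logb 2 ((1 - r - s + c3) / (2 * (1 - s)))) := by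
  have p₀ : prob (single 0 0 1) (rho r s c1 c2 c3) = (1 + s) / 2 := by
    rw [prob_single_rho, re_σ3_zero_zero, one_mul]
  have p₁ : prob (single 1 1 1) (rho r s c1 c2 c3) = (1 - s) / 2 := by
    rw [prob_single_rho, re_σ3_one_one, neg_one_mul, ← sub_eq_add_neg]
  have hp : ∀ k, prob (single k k 1) (rho r s c1 c2 c3) ≠ 0 := by
    simpa [Fin.forall_fin_two, p₀, p₁] using ⟨hs₀, hs₁⟩
  have quotient (x q : ℝ) : x / 4 / (q / 2) = x / (2 * q) := by ring
  rw [← single_zero_zero_one, one_sub_single_zero_zero_one,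
    condEnt_single_zero_zero_of_isDiag (isDiag_blockDiag_rho r s c1 c2 c3) hp]
  refine ⟨p₀, p₁, ?_⟩
  simp only [Fin.sum_univ_two, p₀, p₁, re_blockDiag_rho_apply_self, quotient, re_σ3_zero_zero,
    re_σ3_one_one]
  ring_nf

/-- for the computational-basis measurement B₀ = |0⟩⟨0|, B₁ = |1⟩⟨1| on the
second qubit, p₀ = (1+s)/2, p₁ = (1−s)/2, and the conditional entropy equals S₁. -/
theorem stmt1 (r s c1 c2 c3 : ℝ) (hρ : (rho r s c1 c2 c3).PosSemidef) (hs : |s| < 1) :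
    prob !![1, 0; 0, 0] (rho r s c1 c2 c3) = (1 + s) / 2 ∧
    prob (1 - !![1, 0; 0, 0]) (rho r s c1 c2 c3) = (1 - s) / 2 ∧
    condEnt (rho r s c1 c2 c3) !![1, 0; 0, 0] =
      (-((1 + r + s + c3) / 4 * Real.logb 2 ((1 + r + s + c3) / (2 * (1 + s))))
        - (1 - r + s - c3) / 4 * Real.logb 2 ((1 - r + s - c3) / (2 * (1 + s)))
        - (1 + r - s - c3) / 4 * Real.logb 2 ((1 + r - s - c3) / (2 * (1 - s)))
        - (1 - r - s + c3) / 4 * Real.logb 2 ((1 - r - s + c3) / (2 * (1 - s)))) := by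
  exact stmt1_general r s c1 c2 c3 (by linarith [neg_lt_of_abs_lt hs])
    (by linarith [lt_of_abs_lt hs])
end
end

section
/- Let ρ be as in the context, assumed positive semidefinite. For the measurement in the σ₁ eigenbasis of the second qubit, i.e. B₀ = (1/2)(I+σ₁), B₁ = (1/2)(I−σ₁), one has p₀ = p₁ = 1/2 where p_k = Tr[(I⊗B_k)ρ(I⊗B_k)], and the conditional entropy p₀S(ρ₀) + p₁S(ρ₁), where ρ_k = (I⊗B_k)ρ(I⊗B_k)/p_k, equals S₂ = 1 + f(√(r²+c₁²)). -/
open Matrix Polynomial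
open scoped Kronecker ComplexOrder

noncomputable section

/-!
For a rank-one projection `B = |u⟩⟨v|` one has `B C B = tr(B C) B`, so measuring the second qubit
leaves that qubit in the pure state `B` and gives the first qubit the conditional state in which
every factor `C` on the second qubit is replaced by the number `tr(B C)`. The pure factor does not
change the entropy, because `A ⊗ |u⟩⟨v|` has the same nonzero eigenvalues as `⟨v|u⟩ A`. For
`B = (I ± σ₁)/2` the conditional states are qubit states with Bloch vectors `(±c₁, 0, r)`, whose
eigenvalues `(1 ± √(r² + c₁²))/2` give the entropy; any other equatorial direction works in the
same way.
-/

section Entropy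

variable {m n : Type} [Fintype m] [DecidableEq m] [Fintype n] [DecidableEq n]

lemma sum_map_roots_X_pow_mul {R S : Type*} [CommRing R] [IsDomain R] [AddCommMonoid S] (k : ℕ)
    {p : R[X]} (hp : p ≠ 0) {g : R → S} (hg : g 0 = 0) :
    ((X ^ k * p).roots.map g).sum = (p.roots.map g).sum := by
  simp [roots_mul (mul_ne_zero (pow_ne_zero k X_ne_zero) hp), Multiset.map_nsmul,
    Multiset.sum_nsmul, hg]

-- `A * B` and `B * A` have the same nonzero eigenvalues, and zero eigenvalues do not contribute.
lemma entropy_mul_comm (A : Matrix m n ℂ) (B : Matrix n m ℂ) :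
    entropy (A * B) = entropy (B * A) := by
  have hzero : (fun z : ℂ => z.re * Real.logb 2 z.re) 0 = 0 := by simp
  unfold entropy
  rw [← sum_map_roots_X_pow_mul (Fintype.card n) (charpoly_monic _).ne_zero hzero,
    charpoly_mul_comm', sum_map_roots_X_pow_mul _ (charpoly_monic _).ne_zero hzero]

lemma entropy_reindex (e : n ≃ m) (A : Matrix n n ℂ) :
    entropy (reindex e e A) = entropy A := by
  unfold entropy
  rw [charpoly_reindex]

lemma entropy_kronecker_vecMulVec (A : Matrix m m ℂ) (u v : n → ℂ) :
    entropy (A ⊗ₖ vecMulVec u v) = entropy ((v ⬝ᵥ u) • A) := by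
  have hfactor : A ⊗ₖ vecMulVec u v =
      (A ⊗ₖ replicateCol Unit u) * ((1 : Matrix m m ℂ) ⊗ₖ replicateRow Unit v) := by
    rw [← mul_kronecker_mul, mul_one, ← vecMulVec_eq]
  have hswap : ((1 : Matrix m m ℂ) ⊗ₖ replicateRow Unit v) * (A ⊗ₖ replicateCol Unit u) =
      reindex (Equiv.prodUnique m Unit).symm (Equiv.prodUnique m Unit).symm ((v ⬝ᵥ u) • A) := by
    rw [← mul_kronecker_mul, one_mul]
    ext i j
    simp [mul_comm]
  rw [hfactor, entropy_mul_comm, hswap, entropy_reindex]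

end Entropy

section Measurement

lemma vecMulVec_mul_mul_vecMulVec {n R : Type*} [Fintype n] [CommSemiring R] (u v : n → R)
    (C : Matrix n n R) :
    vecMulVec u v * C * vecMulVec u v = trace (vecMulVec u v * C) • vecMulVec u v := by
  rw [vecMulVec_mul, vecMulVec_mul_vecMulVec, trace_vecMulVec, dotProduct_comm, vecMulVec_smul]

lemma measOp_add (B : M2) (Y Z : M4) : measOp B (Y + Z) = measOp B Y + measOp B Z := by
  simp only [measOp, mul_add, add_mul]

lemma measOp_smul (B : M2) (a : ℂ) (Y : M4) : measOp B (a • Y) = a • measOp B Y := by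
  simp only [measOp, mul_smul_comm, smul_mul_assoc]

lemma measOp_kronecker_vecMulVec (u v : Fin 2 → ℂ) (A C : M2) :
    measOp (vecMulVec u v) (A ⊗ₖ C) = trace (vecMulVec u v * C) • A ⊗ₖ vecMulVec u v := by
  rw [measOp, ← mul_kronecker_mul, ← mul_kronecker_mul, one_mul, mul_one,
    vecMulVec_mul_mul_vecMulVec, kronecker_smul]

end Measurement

section BlochMatrix

/-- The Hermitian matrix `(I + x σ₁ + y σ₂ + z σ₃) / 2` with Bloch vector `(x, y, z)`. It is a qubit
state when `x² + y² + z² ≤ 1` and a rank-one projection when `x² + y² + z² = 1`; no restriction on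
the vector is built in, so that the same notation serves for measurements and for conditional
states. -/
def blochMatrix (x y z : ℝ) : M2 :=
  (1 / 2 : ℂ) • (1 + (x : ℂ) • σ1 + (y : ℂ) • σ2 + (z : ℂ) • σ3)

lemma blochMatrix_eq (x y z : ℝ) : blochMatrix x y z =
    !![(1 + z : ℂ) / 2, (x - y * Complex.I) / 2; (x + y * Complex.I) / 2, (1 - z) / 2] := by
  ext i j
  fin_cases i <;> fin_cases j <;> simp [blochMatrix, σ1, σ2, σ3] <;> ring

lemma one_sub_blochMatrix (x y z : ℝ) :
    1 - blochMatrix x y z = blochMatrix (-x) (-y) (-z) := by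
  unfold blochMatrix
  push_cast
  module

lemma trace_blochMatrix (x y z : ℝ) : trace (blochMatrix x y z) = 1 := by
  rw [blochMatrix_eq, trace_fin_two_of]
  ring

lemma trace_blochMatrix_mul_σ1 (x y z : ℝ) : trace (blochMatrix x y z * σ1) = x := by
  rw [blochMatrix_eq, σ1, mul_fin_two, trace_fin_two_of]
  ring

lemma trace_blochMatrix_mul_σ2 (x y z : ℝ) : trace (blochMatrix x y z * σ2) = y := by
  rw [blochMatrix_eq, σ2, mul_fin_two, trace_fin_two_of]
  linear_combination (-y : ℂ) * Complex.I_sq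

lemma trace_blochMatrix_mul_σ3 (x y z : ℝ) : trace (blochMatrix x y z * σ3) = z := by
  rw [blochMatrix_eq, σ3, mul_fin_two, trace_fin_two_of]
  ring

lemma det_blochMatrix (x y z : ℝ) :
    det (blochMatrix x y z) = (1 - (x ^ 2 + y ^ 2 + z ^ 2)) / 4 := by
  rw [blochMatrix_eq, det_fin_two_of]
  linear_combination (y ^ 2 / 4 : ℂ) * Complex.I_sq

lemma charpoly_blochMatrix {x y z t : ℝ} (ht : t ^ 2 = x ^ 2 + y ^ 2 + z ^ 2) :
    (blochMatrix x y z).charpoly =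
      (X - C (((1 - t) / 2 : ℝ) : ℂ)) * (X - C (((1 + t) / 2 : ℝ) : ℂ)) := by
  have hsum : (((1 - t) / 2 : ℝ) : ℂ) + (((1 + t) / 2 : ℝ) : ℂ) = trace (blochMatrix x y z) := by
    rw [trace_blochMatrix]
    push_cast
    ring
  have hprod : (((1 - t) / 2 : ℝ) : ℂ) * (((1 + t) / 2 : ℝ) : ℂ) = det (blochMatrix x y z) := by
    have ht' : (t : ℂ) ^ 2 = x ^ 2 + y ^ 2 + z ^ 2 := mod_cast ht
    rw [det_blochMatrix]
    push_cast
    linear_combination (-1 / 4 : ℂ) * ht'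
  rw [charpoly_fin_two, ← hsum, ← hprod, C_add, C_mul]
  ring

lemma half_mul_logb_half (a : ℝ) :
    a / 2 * Real.logb 2 (a / 2) = a / 2 * Real.logb 2 a - a / 2 := by
  rcases eq_or_ne a 0 with rfl | ha
  · simp
  · rw [Real.logb_div ha two_ne_zero, Real.logb_self_eq_one one_lt_two]
    ring

lemma entropy_blochMatrix (x y z : ℝ) :
    entropy (blochMatrix x y z) = 1 + f (√(x ^ 2 + y ^ 2 + z ^ 2)) := by
  have ht : √(x ^ 2 + y ^ 2 + z ^ 2) ^ 2 = x ^ 2 + y ^ 2 + z ^ 2 := Real.sq_sqrt (by positivity)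
  rw [entropy, charpoly_blochMatrix ht, roots_mul (mul_ne_zero (X_sub_C_ne_zero _)
    (X_sub_C_ne_zero _)), roots_X_sub_C, roots_X_sub_C]
  simp only [Multiset.map_add, Multiset.map_singleton, Multiset.sum_add, Multiset.sum_singleton,
    Complex.ofReal_re, half_mul_logb_half, f]
  ring

lemma blochMatrix_equatorial_eq_vecMulVec {x y : ℝ} (h : x ^ 2 + y ^ 2 = 1) :
    blochMatrix x y 0 =
      vecMulVec ![1, x + y * Complex.I] ![1 / 2, (x - y * Complex.I) / 2] := by
  have h' : (x : ℂ) ^ 2 + y ^ 2 = 1 := mod_cast h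
  have hnorm : (x + y * Complex.I) * (x - y * Complex.I) = 1 := by
    linear_combination h' - (y : ℂ) ^ 2 * Complex.I_sq
  rw [blochMatrix_eq]
  ext i j
  fin_cases i <;> fin_cases j <;> simp [vecMulVec_apply, div_eq_mul_inv, ← mul_assoc, hnorm]

lemma entropy_kronecker_blochMatrix_equatorial {x y : ℝ} (h : x ^ 2 + y ^ 2 = 1) (A : M2) :
    entropy (A ⊗ₖ blochMatrix x y 0) = entropy A := by
  have htrace := trace_blochMatrix x y 0
  rw [blochMatrix_equatorial_eq_vecMulVec h] at htrace ⊢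
  rw [trace_vecMulVec] at htrace
  rw [entropy_kronecker_vecMulVec, dotProduct_comm, htrace, one_smul]

end BlochMatrix

section EquatorialMeasurement

variable {x y : ℝ} (r s c1 c2 c3 : ℝ)

lemma measOp_equatorial_kronecker (h : x ^ 2 + y ^ 2 = 1) (A C : M2) :
    measOp (blochMatrix x y 0) (A ⊗ₖ C) =
      trace (blochMatrix x y 0 * C) • A ⊗ₖ blochMatrix x y 0 := by
  rw [blochMatrix_equatorial_eq_vecMulVec h, measOp_kronecker_vecMulVec]

lemma measOp_equatorial_rho (h : x ^ 2 + y ^ 2 = 1) :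
    measOp (blochMatrix x y 0) (rho r s c1 c2 c3) =
      (1 / 2 : ℂ) • blochMatrix (c1 * x) (c2 * y) r ⊗ₖ blochMatrix x y 0 := by
  have hstate : blochMatrix (c1 * x) (c2 * y) r =
      (1 / 2 : ℂ) • (1 + (c1 * x : ℂ) • σ1 + (c2 * y : ℂ) • σ2 + (r : ℂ) • σ3) := by
    rw [blochMatrix, Complex.ofReal_mul, Complex.ofReal_mul]
  simp only [rho, measOp_smul, measOp_add, measOp_equatorial_kronecker h, mul_one,
    trace_blochMatrix, trace_blochMatrix_mul_σ1, trace_blochMatrix_mul_σ2,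
    trace_blochMatrix_mul_σ3, hstate, smul_kronecker, add_kronecker, Complex.ofReal_zero]
  module

lemma prob_equatorial_rho (h : x ^ 2 + y ^ 2 = 1) :
    prob (blochMatrix x y 0) (rho r s c1 c2 c3) = 1 / 2 := by
  simp [prob, measOp_equatorial_rho r s c1 c2 c3 h, trace_kronecker, trace_blochMatrix]

lemma entropy_postmeasurement_equatorial_rho (h : x ^ 2 + y ^ 2 = 1) :
    entropy (((prob (blochMatrix x y 0) (rho r s c1 c2 c3) : ℝ) : ℂ)⁻¹ •
        measOp (blochMatrix x y 0) (rho r s c1 c2 c3)) =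
      1 + f (√((c1 * x) ^ 2 + (c2 * y) ^ 2 + r ^ 2)) := by
  have hnormalize : (((1 / 2 : ℝ) : ℂ))⁻¹ * (1 / 2) = 1 := by norm_num
  rw [prob_equatorial_rho r s c1 c2 c3 h, measOp_equatorial_rho r s c1 c2 c3 h, smul_smul,
    hnormalize, one_smul, entropy_kronecker_blochMatrix_equatorial h, entropy_blochMatrix]

end EquatorialMeasurement

-- When the square root exceeds `1`, both sides of the entropy identity involve the logarithm of a
-- negative number, which `Real.logb` evaluates as the logarithm of the absolute value.
theorem stmt2_general (r s c1 c2 c3 : ℝ) {x y : ℝ} (h : x ^ 2 + y ^ 2 = 1) :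
    prob (blochMatrix x y 0) (rho r s c1 c2 c3) = 1 / 2 ∧
    prob (1 - blochMatrix x y 0) (rho r s c1 c2 c3) = 1 / 2 ∧
    condEnt (rho r s c1 c2 c3) (blochMatrix x y 0) =
      1 + f (√((c1 * x) ^ 2 + (c2 * y) ^ 2 + r ^ 2)) := by
  have hneg : (-x) ^ 2 + (-y) ^ 2 = 1 := by rwa [neg_sq, neg_sq]
  have hcompl : 1 - blochMatrix x y 0 = blochMatrix (-x) (-y) 0 := by
    rw [one_sub_blochMatrix, neg_zero]
  have hprob := prob_equatorial_rho r s c1 c2 c3 h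
  have hprob' := prob_equatorial_rho r s c1 c2 c3 hneg
  refine ⟨hprob, hcompl ▸ hprob', ?_⟩
  rw [condEnt, hcompl, entropy_postmeasurement_equatorial_rho r s c1 c2 c3 h,
    entropy_postmeasurement_equatorial_rho r s c1 c2 c3 hneg, hprob, hprob', mul_neg, mul_neg,
    neg_sq, neg_sq]
  ring

/-- for the σ₁-eigenbasis measurement B₀ = (1/2)(I+σ₁), B₁ = (1/2)(I−σ₁)
on the second qubit, p₀ = p₁ = 1/2 and the conditional entropy is S₂ = 1 + f(√(r²+c₁²)). -/
theorem stmt2 (r s c1 c2 c3 : ℝ) (hρ : (rho r s c1 c2 c3).PosSemidef) :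
    prob ((1 / 2 : ℂ) • (1 + σ1)) (rho r s c1 c2 c3) = 1 / 2 ∧
    prob (1 - (1 / 2 : ℂ) • (1 + σ1)) (rho r s c1 c2 c3) = 1 / 2 ∧
    condEnt (rho r s c1 c2 c3) ((1 / 2 : ℂ) • (1 + σ1)) =
      1 + f (Real.sqrt (r ^ 2 + c1 ^ 2)) := by
  have hplus : (1 / 2 : ℂ) • (1 + σ1) = blochMatrix 1 0 0 := by simp [blochMatrix]
  rw [hplus]
  simpa [add_comm] using stmt2_general r s c1 c2 c3 (x := 1) (y := 0) (by norm_num)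
end
end

section
/- Let ρ be as in the context. The multiset of eigenvalues of ρ (with multiplicity) is exactly {u₊, u₋, v₊, v₋}, where u± = (1/4)[1 − c₃ ± √((r−s)² + (c₁+c₂)²)] and v± = (1/4)[1 + c₃ ± √((r+s)² + (c₁−c₂)²)]. -/
open Matrix Polynomial
open scoped Kronecker ComplexOrder

noncomputable section

/-!
Every term of `ρ` commutes with the parity `σ₃ ⊗ σ₃`, so `ρ` is block diagonal on the span of
`e₀ ⊗ e₀, e₁ ⊗ e₁` and that of `e₀ ⊗ e₁, e₁ ⊗ e₀`. Each block is a combination of the identity and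
the Pauli matrices, and `a I + x σ₁ + y σ₂ + z σ₃` has trace `2 a` and determinant
`a² - (x² + y² + z²)`, hence eigenvalues `a ± √(x² + y² + z²)`.
-/

theorem roots_charpoly_fin_two_eq_pair_iff {R : Type*} [CommRing R] [IsDomain R]
    {A : Matrix (Fin 2) (Fin 2) R} {u v : R} :
    A.charpoly.roots = {u, v} ↔ A.trace = u + v ∧ A.det = u * v := by
  have charpoly_eq : A.charpoly = C 1 * X ^ 2 + C (-A.trace) * X + C A.det := by
    rw [charpoly_fin_two, C_1, C_neg]
    ring
  rw [charpoly_eq, roots_quadratic_eq_pair_iff_of_ne_zero one_ne_zero, neg_one_mul, neg_inj,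
    one_mul]

/-- The Pauli expansion `a I + x σ₁ + y σ₂ + z σ₃` of a 2×2 matrix; the parity blocks of `rho` are
written in this form. The coefficients are complex, so every 2×2 matrix is of this form. -/
def pauliExpansion (a x y z : ℂ) : M2 :=
  a • (1 : M2) + x • σ1 + y • σ2 + z • σ3

theorem pauliExpansion_eq (a x y z : ℂ) :
    pauliExpansion a x y z = !![a + z, x - y * Complex.I; x + y * Complex.I, a - z] := by
  ext i j
  fin_cases i <;> fin_cases j <;> simp [pauliExpansion, σ1, σ2, σ3, sub_eq_add_neg]

theorem trace_pauliExpansion (a x y z : ℂ) : (pauliExpansion a x y z).trace = 2 * a := by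
  rw [pauliExpansion_eq, trace_fin_two_of]
  ring

theorem det_pauliExpansion (a x y z : ℂ) :
    (pauliExpansion a x y z).det = a ^ 2 - (x ^ 2 + y ^ 2 + z ^ 2) := by
  rw [pauliExpansion_eq, det_fin_two_of]
  linear_combination y ^ 2 * Complex.I_sq

theorem roots_charpoly_smul_pauliExpansion (t : ℂ) {a x y z d : ℂ}
    (hd : d ^ 2 = x ^ 2 + y ^ 2 + z ^ 2) :
    (t • pauliExpansion a x y z).charpoly.roots = {t * (a + d), t * (a - d)} := by
  rw [roots_charpoly_fin_two_eq_pair_iff, trace_smul, det_smul, trace_pauliExpansion,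
    det_pauliExpansion, ← hd, smul_eq_mul, Fintype.card_fin]
  constructor <;> ring

theorem roots_charpoly_smul_pauliExpansion_ofReal (t a x y z : ℝ) :
    ((t : ℂ) • pauliExpansion a x y z).charpoly.roots =
      {((t * (a + √(x ^ 2 + y ^ 2 + z ^ 2)) : ℝ) : ℂ),
       ((t * (a - √(x ^ 2 + y ^ 2 + z ^ 2)) : ℝ) : ℂ)} := by
  have sqrt_sq : (√(x ^ 2 + y ^ 2 + z ^ 2) : ℂ) ^ 2 = (x : ℂ) ^ 2 + (y : ℂ) ^ 2 + (z : ℂ) ^ 2 := by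
    exact_mod_cast Real.sq_sqrt (by positivity : 0 ≤ x ^ 2 + y ^ 2 + z ^ 2)
  rw [roots_charpoly_smul_pauliExpansion _ sqrt_sq]
  push_cast
  rfl

/-- The splitting of the product basis of two qubits by parity, under which `rho` becomes block
diagonal: `inl i` is the vector with both indices `i`, `inr i` the one with indices `i` and
`i + 1` (mod 2). -/
def parityEquiv : Fin 2 ⊕ Fin 2 ≃ Fin 2 × Fin 2 where
  toFun := Sum.elim (fun i => (i, i)) (fun i => (i, i + 1))
  invFun p := if p.1 = p.2 then .inl p.1 else .inr p.1
  left_inv := by decide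
  right_inv := by decide

/-- The block of `rho` on the span of `e₀ ⊗ e₀` and `e₁ ⊗ e₁`. -/
def evenBlock (r s c1 c2 c3 : ℝ) : M2 :=
  ((1 / 4 : ℝ) : ℂ) • pauliExpansion (1 + c3 : ℝ) (c1 - c2 : ℝ) (0 : ℝ) (r + s : ℝ)

/-- The block of `rho` on the span of `e₀ ⊗ e₁` and `e₁ ⊗ e₀`. -/
def oddBlock (r s c1 c2 c3 : ℝ) : M2 :=
  ((1 / 4 : ℝ) : ℂ) • pauliExpansion (1 - c3 : ℝ) (c1 + c2 : ℝ) (0 : ℝ) (r - s : ℝ)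

section

variable (r s c1 c2 c3 : ℝ)

theorem rho_submatrix_parityEquiv :
    (rho r s c1 c2 c3).submatrix parityEquiv parityEquiv =
      fromBlocks (evenBlock r s c1 c2 c3) 0 0 (oddBlock r s c1 c2 c3) := by
  rw [evenBlock, oddBlock, pauliExpansion_eq, pauliExpansion_eq]
  ext i j
  rcases i with i | i <;> rcases j with j | j <;> fin_cases i <;> fin_cases j <;>
    simp [rho, parityEquiv, σ1, σ2, σ3] <;> ring

theorem charpoly_rho :
    (rho r s c1 c2 c3).charpoly =
      (oddBlock r s c1 c2 c3).charpoly * (evenBlock r s c1 c2 c3).charpoly := by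
  rw [← charpoly_reindex parityEquiv.symm, reindex_apply, Equiv.symm_symm,
    rho_submatrix_parityEquiv, charpoly_fromBlocks_zero₁₂, mul_comm]

theorem roots_charpoly_evenBlock :
    (evenBlock r s c1 c2 c3).charpoly.roots =
      {((1 / 4 * (1 + c3 + √((r + s) ^ 2 + (c1 - c2) ^ 2)) : ℝ) : ℂ),
       ((1 / 4 * (1 + c3 - √((r + s) ^ 2 + (c1 - c2) ^ 2)) : ℝ) : ℂ)} := by
  rw [evenBlock, roots_charpoly_smul_pauliExpansion_ofReal, zero_pow two_ne_zero, add_zero,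
    add_comm (_ ^ 2)]

theorem roots_charpoly_oddBlock :
    (oddBlock r s c1 c2 c3).charpoly.roots =
      {((1 / 4 * (1 - c3 + √((r - s) ^ 2 + (c1 + c2) ^ 2)) : ℝ) : ℂ),
       ((1 / 4 * (1 - c3 - √((r - s) ^ 2 + (c1 + c2) ^ 2)) : ℝ) : ℂ)} := by
  rw [oddBlock, roots_charpoly_smul_pauliExpansion_ofReal, zero_pow two_ne_zero, add_zero,
    add_comm (_ ^ 2)]

end

/-- the multiset of eigenvalues of ρ (roots of its characteristic
polynomial, with multiplicity) is {u₊, u₋, v₊, v₋}. -/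
theorem stmt4 (r s c1 c2 c3 : ℝ) :
    (rho r s c1 c2 c3).charpoly.roots =
      {((1 / 4 * (1 - c3 + Real.sqrt ((r - s) ^ 2 + (c1 + c2) ^ 2)) : ℝ) : ℂ),
       ((1 / 4 * (1 - c3 - Real.sqrt ((r - s) ^ 2 + (c1 + c2) ^ 2)) : ℝ) : ℂ),
       ((1 / 4 * (1 + c3 + Real.sqrt ((r + s) ^ 2 + (c1 - c2) ^ 2)) : ℝ) : ℂ),
       ((1 / 4 * (1 + c3 - Real.sqrt ((r + s) ^ 2 + (c1 - c2) ^ 2)) : ℝ) : ℂ)} := by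
  rw [charpoly_rho, roots_mul ((charpoly_monic _).mul (charpoly_monic _)).ne_zero,
    roots_charpoly_oddBlock, roots_charpoly_evenBlock]
  rfl
end
end

section
/- Let ρ be as in the context and let ρ̃ = (σ₂⊗σ₂) ρ (σ₂⊗σ₂) (note ρ has real entries, so complex conjugation acts trivially). Then the multiset of eigenvalues of the matrix product ρρ̃ (with multiplicity) is exactly {λ₁, λ₂, λ₃, λ₄}, where λ₁ = (1/16)(c₁−c₂−√((1+c₃)²−(r+s)²))², λ₂ = (1/16)(c₁−c₂+√((1+c₃)²−(r+s)²))², λ₃ = (1/16)(c₁+c₂−√((1−c₃)²−(r−s)²))², λ₄ = (1/16)(c₁+c₂+√((1−c₃)²−(r−s)²))², under the assumptions (1+c₃)² ≥ (r+s)² and (1−c₃)² ≥ (r−s)². -/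
open Matrix Polynomial
open scoped Kronecker ComplexOrder

noncomputable section

/-!
With `F = σ₂ ⊗ σ₂` we have `ρρ̃ = ρ(FρF) = (ρF)²`. Both `ρ` and `F` preserve the span of
`|00⟩, |11⟩` and that of `|01⟩, |10⟩`, and on either one `F = ∓σ₁`, so `ρF` acts by
`∓ !![b, a; d, b]`, where `a, d` are the diagonal entries of the block of `ρ` and `b` is its
off-diagonal entry. The eigenvalues of such a block are `∓(b ± √(ad))`, and those of `ρρ̃` are
their squares.
-/

section Charpoly

variable {R : Type*} [CommRing R]

section BlockDiagonal

variable {n o : Type*} [DecidableEq n] [DecidableEq o] [Fintype n] [Fintype o]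

lemma charmatrix_blockDiagonal (M : o → Matrix n n R) :
    (blockDiagonal M).charmatrix = blockDiagonal fun k => (M k).charmatrix := by
  have hX : (scalar (n × o) (X : R[X])) = blockDiagonal fun _ => scalar n X := by
    simp only [scalar_apply, blockDiagonal_diagonal]
  simp only [charmatrix, hX, RingHom.mapMatrix_apply, blockDiagonal_map _ _ (map_zero C),
    ← blockDiagonal_sub]
  rfl

lemma charpoly_blockDiagonal (M : o → Matrix n n R) :
    (blockDiagonal M).charpoly = ∏ k, (M k).charpoly := by
  simp only [charpoly, charmatrix_blockDiagonal, det_blockDiagonal]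

end BlockDiagonal

lemma trace_sq_fin_two (M : Matrix (Fin 2) (Fin 2) R) :
    (M ^ 2).trace = M.trace ^ 2 - 2 * M.det := by
  simp only [sq, trace_fin_two, det_fin_two, mul_apply, Fin.sum_univ_two]
  ring

lemma roots_charpoly_fin_two [IsDomain R] {M : Matrix (Fin 2) (Fin 2) R} {α β : R}
    (htr : M.trace = α + β) (hdet : M.det = α * β) : M.charpoly.roots = {α, β} := by
  have hfactor : M.charpoly = (X - C α) * (X - C β) := by
    rw [charpoly_fin_two, htr, hdet, C_add, C_mul]
    ring
  rw [hfactor, roots_mul (mul_ne_zero (X_sub_C_ne_zero α) (X_sub_C_ne_zero β)),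
    roots_X_sub_C, roots_X_sub_C]
  rfl

lemma roots_charpoly_sq_fin_two [IsDomain R] {M : Matrix (Fin 2) (Fin 2) R} {α β : R}
    (htr : M.trace = α + β) (hdet : M.det = α * β) :
    (M ^ 2).charpoly.roots = {α ^ 2, β ^ 2} := by
  apply roots_charpoly_fin_two
  · rw [trace_sq_fin_two, htr, hdet]
    ring
  · rw [det_pow, hdet, mul_pow]

end Charpoly

lemma roots_charpoly_mul_σ1_sq {a b d u : ℂ} (hu : u ^ 2 = a * d) :
    ((!![a, b; b, d] * σ1) ^ 2).charpoly.roots = {(b - u) ^ 2, (b + u) ^ 2} := by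
  have hprod : !![a, b; b, d] * σ1 = !![b, a; d, b] := by
    simp [σ1]
  rw [hprod]
  apply roots_charpoly_sq_fin_two
  · rw [trace_fin_two_of]
    ring
  · rw [det_fin_two_of]
    linear_combination hu

/-- The controlled-NOT permutation `(i, j) ↦ (i, i + j)` of the two-qubit basis, which turns the
parity `i + j` into the second coordinate. -/
def cnot : Fin 2 × Fin 2 ≃ Fin 2 × Fin 2 :=
  Equiv.prodShear (Equiv.refl _) Equiv.addLeft

section XMatrix

variable {R : Type*}

/-- The X-shaped matrix acting by `A` on the even-parity basis vectors `|00⟩, |11⟩` and by `B` on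
the odd-parity ones `|01⟩, |10⟩`. -/
def xMatrix [Zero R] (A B : Matrix (Fin 2) (Fin 2) R) :
    Matrix (Fin 2 × Fin 2) (Fin 2 × Fin 2) R :=
  reindex cnot.symm cnot.symm (blockDiagonal ![A, B])

lemma xMatrix_mul [NonUnitalNonAssocSemiring R] (A B A' B' : Matrix (Fin 2) (Fin 2) R) :
    xMatrix A B * xMatrix A' B' = xMatrix (A * A') (B * B') := by
  have hblocks : ![A * A', B * B'] = fun k => ![A, B] k * ![A', B'] k := by
    ext1 k
    fin_cases k <;> rfl
  simp only [xMatrix, hblocks, blockDiagonal_mul, reindex_apply, submatrix_mul_equiv]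

lemma xMatrix_sq [Semiring R] (A B : Matrix (Fin 2) (Fin 2) R) :
    xMatrix A B ^ 2 = xMatrix (A ^ 2) (B ^ 2) := by
  simp only [sq, xMatrix_mul]

lemma charpoly_xMatrix [CommRing R] (A B : Matrix (Fin 2) (Fin 2) R) :
    (xMatrix A B).charpoly = A.charpoly * B.charpoly := by
  rw [xMatrix, charpoly_reindex, charpoly_blockDiagonal, Fin.prod_univ_two]
  rfl

lemma roots_charpoly_xMatrix [CommRing R] [IsDomain R] (A B : Matrix (Fin 2) (Fin 2) R) :
    (xMatrix A B).charpoly.roots = A.charpoly.roots + B.charpoly.roots := by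
  rw [charpoly_xMatrix, roots_mul (A.charpoly_monic.mul B.charpoly_monic).ne_zero]

end XMatrix

lemma σ2_kronecker_σ2 : σ2 ⊗ₖ σ2 = xMatrix (-σ1) σ1 := by
  ext ⟨i, i'⟩ ⟨j, j'⟩
  fin_cases i <;> fin_cases i' <;> fin_cases j <;> fin_cases j' <;>
    simp [xMatrix, cnot, Equiv.prodShear, blockDiagonal_apply, σ1, σ2]

lemma rho_eq_xMatrix (r s c1 c2 c3 : ℝ) :
    rho r s c1 c2 c3 =
      xMatrix (R := ℂ)
        !![(1 + r + s + c3) / 4, (c1 - c2) / 4; (c1 - c2) / 4, (1 - r - s + c3) / 4]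
        !![(1 + r - s - c3) / 4, (c1 + c2) / 4; (c1 + c2) / 4, (1 - r + s - c3) / 4] := by
  ext ⟨i, i'⟩ ⟨j, j'⟩
  fin_cases i <;> fin_cases i' <;> fin_cases j <;> fin_cases j' <;>
    simp [rho, xMatrix, cnot, Equiv.prodShear, blockDiagonal_apply, σ1, σ2, σ3] <;> ring

theorem stmt5_general (r s c1 c2 c3 : ℝ) {u v : ℂ}
    (hu : u ^ 2 = (1 + c3) ^ 2 - (r + s) ^ 2) (hv : v ^ 2 = (1 - c3) ^ 2 - (r - s) ^ 2) :
    (rho r s c1 c2 c3 * ((σ2 ⊗ₖ σ2) * rho r s c1 c2 c3 * (σ2 ⊗ₖ σ2))).charpoly.roots =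
      {1 / 16 * (c1 - c2 - u) ^ 2, 1 / 16 * (c1 - c2 + u) ^ 2,
       1 / 16 * (c1 + c2 - v) ^ 2, 1 / 16 * (c1 + c2 + v) ^ 2} := by
  have hsq : rho r s c1 c2 c3 * ((σ2 ⊗ₖ σ2) * rho r s c1 c2 c3 * (σ2 ⊗ₖ σ2)) =
      (rho r s c1 c2 c3 * (σ2 ⊗ₖ σ2)) ^ 2 := by
    simp only [sq, mul_assoc]
  have heven : (u / 4) ^ 2 = (1 + r + s + c3) / 4 * ((1 - r - s + c3) / 4) := by
    linear_combination hu / 16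
  have hodd : (v / 4) ^ 2 = (1 + r - s - c3) / 4 * ((1 - r + s - c3) / 4) := by
    linear_combination hv / 16
  have hsub (z w : ℂ) : (z / 4 - w / 4) ^ 2 = 1 / 16 * (z - w) ^ 2 := by ring
  have hadd (z w : ℂ) : (z / 4 + w / 4) ^ 2 = 1 / 16 * (z + w) ^ 2 := by ring
  rw [hsq, rho_eq_xMatrix, σ2_kronecker_σ2, xMatrix_mul, xMatrix_sq, roots_charpoly_xMatrix,
    mul_neg, neg_sq, roots_charpoly_mul_σ1_sq heven, roots_charpoly_mul_σ1_sq hodd]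
  simp only [hsub, hadd]
  rfl

/-- the multiset of eigenvalues of ρρ̃, with ρ̃ = (σ₂⊗σ₂)ρ(σ₂⊗σ₂),
is {λ₁, λ₂, λ₃, λ₄}. -/
theorem stmt5 (r s c1 c2 c3 : ℝ)
    (h1 : (r + s) ^ 2 ≤ (1 + c3) ^ 2) (h2 : (r - s) ^ 2 ≤ (1 - c3) ^ 2) :
    ((rho r s c1 c2 c3) *
      ((σ2 ⊗ₖ σ2) * (rho r s c1 c2 c3) * (σ2 ⊗ₖ σ2))).charpoly.roots =
      {((1 / 16 * (c1 - c2 - Real.sqrt ((1 + c3) ^ 2 - (r + s) ^ 2)) ^ 2 : ℝ) : ℂ),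
       ((1 / 16 * (c1 - c2 + Real.sqrt ((1 + c3) ^ 2 - (r + s) ^ 2)) ^ 2 : ℝ) : ℂ),
       ((1 / 16 * (c1 + c2 - Real.sqrt ((1 - c3) ^ 2 - (r - s) ^ 2)) ^ 2 : ℝ) : ℂ),
       ((1 / 16 * (c1 + c2 + Real.sqrt ((1 - c3) ^ 2 - (r - s) ^ 2)) ^ 2 : ℝ) : ℂ)} := by
  push_cast
  exact stmt5_general r s c1 c2 c3 (mod_cast Real.sq_sqrt (sub_nonneg.2 h1))
    (mod_cast Real.sq_sqrt (sub_nonneg.2 h2))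
end
end

section
/- Let r and c₃ be real numbers with |r| < 1 and |c₃| < 1, and set s = c₃·r. Then S₁ := −[(1+r+s+c₃)/4]log₂[(1+r+s+c₃)/(2(1+s))] − [(1−r+s−c₃)/4]log₂[(1−r+s−c₃)/(2(1+s))] − [(1+r−s−c₃)/4]log₂[(1+r−s−c₃)/(2(1−s))] − [(1−r−s+c₃)/4]log₂[(1−r−s+c₃)/(2(1−s))] equals 1 + f(r) + f(c₃) − f(c₃r) (with the convention 0·log₂0 := 0). -/
open Matrix Polynomial
open scoped Kronecker ComplexOrder

noncomputable section

/-!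
Let `X` and `Y` be independent signs with means `r` and `c₃`. The sign `X Y` has mean
`s = c₃ r`, and `S₁` is the conditional entropy `H(X, Y | X Y)`. Since `X Y` is a function of
`(X, Y)`, the chain rule and independence give `S₁ = H(X) + H(Y) - H(X Y)`; a sign with mean `t`
has entropy `1 + f t` bits.
-/

section

open Real

theorem one_add_f_eq_binEntropy_div_log_two (t : ℝ) :
    1 + f t = binEntropy ((1 + t) / 2) / log 2 := by
  have negMulLog_half (x : ℝ) : negMulLog (x / 2) = (negMulLog x + x * log 2) / 2 := by
    rw [div_eq_mul_inv, negMulLog_mul]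
    simp only [negMulLog, log_inv]
    ring
  have hcompl : 1 - (1 + t) / 2 = (1 - t) / 2 := by ring
  rw [binEntropy_eq_negMulLog_add_negMulLog_one_sub, hcompl, negMulLog_half, negMulLog_half]
  simp only [f, negMulLog, logb]
  field

theorem sum_neg_mul_log_div_sum {ι : Type*} (t : Finset ι) (p : ι → ℝ)
    (hp : ∀ i ∈ t, 0 ≤ p i) :
    ∑ i ∈ t, -(p i * log (p i / ∑ j ∈ t, p j)) =
      ∑ i ∈ t, negMulLog (p i) - negMulLog (∑ i ∈ t, p i) := by
  have log_quotient (i : ι) (hi : i ∈ t) :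
      -(p i * log (p i / ∑ j ∈ t, p j)) = negMulLog (p i) + p i * log (∑ j ∈ t, p j) := by
    rcases eq_or_ne (p i) 0 with hzero | hne
    · simp [hzero]
    · have hpos : 0 < ∑ j ∈ t, p j :=
        Finset.sum_pos' hp ⟨i, hi, (hp i hi).lt_of_ne' hne⟩
      rw [log_div hne hpos.ne', negMulLog]
      ring
  rw [Finset.sum_congr rfl log_quotient, Finset.sum_add_distrib, ← Finset.sum_mul, negMulLog]
  ring

theorem neg_mul_log_div_add_sub_mul_log_div_add {x y : ℝ} (hx : 0 ≤ x) (hy : 0 ≤ y) :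
    -(x * log (x / (x + y))) - y * log (y / (x + y)) =
      negMulLog x + negMulLog y - negMulLog (x + y) := by
  have hnonneg : ∀ i ∈ Finset.univ, 0 ≤ ![x, y] i := by simp [hx, hy]
  have grouping := sum_neg_mul_log_div_sum _ _ hnonneg
  simp only [Fin.sum_univ_two, Matrix.cons_val_zero, Matrix.cons_val_one] at grouping
  linarith

theorem binEntropy_add_binEntropy (p q : ℝ) :
    binEntropy p + binEntropy q =
      negMulLog (p * q) + negMulLog ((1 - p) * (1 - q)) +
        (negMulLog (p * (1 - q)) + negMulLog ((1 - p) * q)) := by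
  simp only [binEntropy_eq_negMulLog_add_negMulLog_one_sub, negMulLog_mul]
  ring

-- With `p` and `q` the probabilities of `X = 1` and `Y = 1`, `w` is that of `X Y = 1`.
theorem binEntropy_add_binEntropy_sub_binEntropy {p q w : ℝ} (hp : p ∈ Set.Icc 0 1)
    (hq : q ∈ Set.Icc 0 1) (hw : w = p * q + (1 - p) * (1 - q)) :
    binEntropy p + binEntropy q - binEntropy w =
      -(p * q * log (p * q / w)) - (1 - p) * (1 - q) * log ((1 - p) * (1 - q) / w)
        - p * (1 - q) * log (p * (1 - q) / (1 - w))
        - (1 - p) * q * log ((1 - p) * q / (1 - w)) := by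
  have hp' : 0 ≤ 1 - p := sub_nonneg.mpr hp.2
  have hq' : 0 ≤ 1 - q := sub_nonneg.mpr hq.2
  have hw' : 1 - w = p * (1 - q) + (1 - p) * q := by rw [hw]; ring
  have equal_signs :=
    neg_mul_log_div_add_sub_mul_log_div_add (mul_nonneg hp.1 hq.1) (mul_nonneg hp' hq')
  have opposite_signs :=
    neg_mul_log_div_add_sub_mul_log_div_add (mul_nonneg hp.1 hq') (mul_nonneg hp' hq.1)
  rw [← hw] at equal_signs
  rw [← hw'] at opposite_signs
  rw [binEntropy_add_binEntropy, binEntropy_eq_negMulLog_add_negMulLog_one_sub w]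
  linarith

theorem one_add_div_two_mem_Icc {t : ℝ} (ht : |t| ≤ 1) : (1 + t) / 2 ∈ Set.Icc (0 : ℝ) 1 := by
  obtain ⟨hlower, hupper⟩ := abs_le.mp ht
  constructor <;> linarith

end

-- At `s = ±1` the quotients with denominator `0` carry weight `0`.
theorem stmt12_general (r c3 : ℝ) (hr : |r| ≤ 1) (hc3 : |c3| ≤ 1) (s : ℝ) (hs : s = c3 * r) :
    (-((1 + r + s + c3) / 4 * Real.logb 2 ((1 + r + s + c3) / (2 * (1 + s))))
        - (1 - r + s - c3) / 4 * Real.logb 2 ((1 - r + s - c3) / (2 * (1 + s)))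
        - (1 + r - s - c3) / 4 * Real.logb 2 ((1 + r - s - c3) / (2 * (1 - s)))
        - (1 - r - s + c3) / 4 * Real.logb 2 ((1 - r - s + c3) / (2 * (1 - s)))) =
    1 + f r + f c3 - f (c3 * r) := by
  have entropy_split : 1 + f r + f c3 - f (c3 * r) = (1 + f r) + (1 + f c3) - (1 + f s) := by
    rw [hs]; ring
  have weight_pos_pos : (1 + r) / 2 * ((1 + c3) / 2) = (1 + r + s + c3) / 4 := by rw [hs]; ring
  have weight_neg_neg : (1 - (1 + r) / 2) * (1 - (1 + c3) / 2) = (1 - r + s - c3) / 4 := by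
    rw [hs]; ring
  have weight_pos_neg : (1 + r) / 2 * (1 - (1 + c3) / 2) = (1 + r - s - c3) / 4 := by rw [hs]; ring
  have weight_neg_pos : (1 - (1 + r) / 2) * ((1 + c3) / 2) = (1 - r - s + c3) / 4 := by
    rw [hs]; ring
  have equal_signs : (1 + s) / 2 =
      (1 + r) / 2 * ((1 + c3) / 2) + (1 - (1 + r) / 2) * (1 - (1 + c3) / 2) := by
    rw [weight_pos_pos, weight_neg_neg]; ring
  have opposite_signs : 1 - (1 + s) / 2 = (1 - s) / 2 := by ring
  have normalize (x w : ℝ) : x / 4 / (w / 2) = x / (2 * w) := by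
    rw [div_div_div_eq]; ring
  rw [entropy_split]
  simp only [one_add_f_eq_binEntropy_div_log_two, ← add_div, ← sub_div]
  rw [binEntropy_add_binEntropy_sub_binEntropy (one_add_div_two_mem_Icc hr)
    (one_add_div_two_mem_Icc hc3) equal_signs]
  simp only [weight_pos_pos, weight_neg_neg, weight_pos_neg, weight_neg_pos, opposite_signs,
    normalize, Real.logb]
  ring

/-- with s = c₃r, S₁ = 1 + f(r) + f(c₃) − f(c₃r). -/
theorem stmt12 (r c3 : ℝ) (hr : |r| < 1) (hc3 : |c3| < 1) (s : ℝ) (hs : s = c3 * r) :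
    (-((1 + r + s + c3) / 4 * Real.logb 2 ((1 + r + s + c3) / (2 * (1 + s))))
        - (1 - r + s - c3) / 4 * Real.logb 2 ((1 - r + s - c3) / (2 * (1 + s)))
        - (1 + r - s - c3) / 4 * Real.logb 2 ((1 + r - s - c3) / (2 * (1 - s)))
        - (1 - r - s + c3) / 4 * Real.logb 2 ((1 - r - s + c3) / (2 * (1 - s)))) =
    1 + f r + f c3 - f (c3 * r) :=
  stmt12_general r c3 hr.le hc3.le s hs
end
end

section
/- Let r, c₁ be real numbers with r² + c₁² ≤ 1. Then the function p ↦ S₂(p) = 1 + f(√(r² + (1−p)⁴c₁²)) is monotonically increasing on [0,1]; that is, for all 0 ≤ p₁ ≤ p₂ ≤ 1, S₂(p₁) ≤ S₂(p₂). -/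
open Matrix Polynomial
open scoped Kronecker ComplexOrder

noncomputable section

/-
Up to the constant `1`, the function `f` is the binary entropy, in bits, of the spectrum
`(1 ± t) / 2` of a qubit state with Bloch vector of length `t`. Lengthening the vector moves
`(1 - t) / 2` away from the maximizer `1 / 2` and so lowers the entropy. Here the vector is
`(r, 0, (1 - p)² c₁)`, whose length decreases with `p` and is at most `1`.
-/

lemma f_eq_binEntropy_div_log_two_sub_one (t : ℝ) :
    f t = Real.binEntropy ((1 - t) / 2) / Real.log 2 - 1 := by
  have hlog : Real.log 2 ≠ 0 := (Real.log_pos one_lt_two).ne'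
  have h_compl : 1 - (1 - t) / 2 = (1 + t) / 2 := by ring
  -- Unlike `log_div`, splitting off the factor `2⁻¹` with `negMulLog_mul` also covers `t = ±1`.
  rw [Real.binEntropy_eq_negMulLog_add_negMulLog_one_sub, h_compl, div_eq_mul_inv (1 - t),
    div_eq_mul_inv (1 + t), Real.negMulLog_mul, Real.negMulLog_mul]
  simp only [f, Real.negMulLog, Real.logb, Real.log_inv]
  field_simp
  ring

lemma f_strictAntiOn : StrictAntiOn f (Set.Icc 0 1) := by
  rintro s ⟨hs, hs'⟩ t ⟨_, ht'⟩ hst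
  have h_entropy : Real.binEntropy ((1 - t) / 2) < Real.binEntropy ((1 - s) / 2) :=
    Real.binEntropy_strictMonoOn ⟨by linarith, by linarith⟩ ⟨by linarith, by linarith⟩
      (by linarith)
  simp only [f_eq_binEntropy_div_log_two_sub_one]
  gcongr

section

variable {a b : ℝ} (n : ℕ)

lemma antitoneOn_sqrt_add_one_sub_pow_mul (hb : 0 ≤ b) :
    AntitoneOn (fun p : ℝ ↦ √(a + (1 - p) ^ n * b)) (Set.Iic 1) := by
  intro p _ q hq hpq
  have hq' : 0 ≤ 1 - q := sub_nonneg.2 hq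
  dsimp only
  gcongr

lemma mapsTo_sqrt_add_one_sub_pow_mul (hb : 0 ≤ b) (hab : a + b ≤ 1) :
    Set.MapsTo (fun p : ℝ ↦ √(a + (1 - p) ^ n * b)) (Set.Icc 0 1) (Set.Icc 0 1) := by
  rintro p ⟨hp, hp'⟩
  refine ⟨Real.sqrt_nonneg _, Real.sqrt_le_one.2 ?_⟩
  have hpow : (1 - p) ^ n ≤ 1 := pow_le_one₀ (sub_nonneg.2 hp') (sub_le_self 1 hp)
  calc
    a + (1 - p) ^ n * b ≤ a + b := by gcongr; exact mul_le_of_le_one_left hb hpow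
    _ ≤ 1 := hab

end

/-- p ↦ S₂(p) = 1 + f(√(r² + (1−p)⁴c₁²)) is monotonically increasing
on [0,1]. -/
theorem stmt14 (r c1 : ℝ) (hrc : r ^ 2 + c1 ^ 2 ≤ 1)
    (p1 p2 : ℝ) (h0 : 0 ≤ p1) (h12 : p1 ≤ p2) (h1 : p2 ≤ 1) :
    1 + f (Real.sqrt (r ^ 2 + (1 - p1) ^ 4 * c1 ^ 2)) ≤
      1 + f (Real.sqrt (r ^ 2 + (1 - p2) ^ 4 * c1 ^ 2)) := by
  have h_length := (antitoneOn_sqrt_add_one_sub_pow_mul (a := r ^ 2) 4 (sq_nonneg c1)).mono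
    (Set.Icc_subset_Iic_self (a := 0))
  have h_mapsTo := mapsTo_sqrt_add_one_sub_pow_mul 4 (sq_nonneg c1) hrc
  have h_mono := f_strictAntiOn.antitoneOn.comp h_length h_mapsTo
  exact add_le_add_right (h_mono ⟨h0, h12.trans h1⟩ ⟨h0.trans h12, h1⟩ h12) 1
end
end

section
/- Let r, c₁, c₃ be real numbers with |r| < 1, |c₃| ≤ 1 and r² + c₁² ≤ 1, and define S₁ = 1 + f(r) + f(c₃) − f(c₃r) and, for 0 ≤ p ≤ 1, S₂(p) = 1 + f(√(r² + (1−p)⁴c₁²)). If S₂(0) ≤ S₁, then there exists p₀ ∈ [0,1] such that S₂(p) ≤ S₁ for all p ∈ [0,p₀] and S₂(p) ≥ S₁ for all p ∈ [p₀,1]. -/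
open Matrix Polynomial
open scoped Kronecker ComplexOrder

noncomputable section

/-!
Dephasing shrinks the conditional Bloch vector, and `f` is even and decreases on `[0, 1]`, so `S₂`
is continuous and increasing. At `p = 1` it equals `1 + f r`, which is at least
`S₁ = 1 + f r + (f c₃ - f (c₃ r))` because `|c₃ r| ≤ |c₃| ≤ 1`. The intermediate value theorem then
gives the transition point.
-/

theorem exists_crossing_of_monotoneOn {α β : Type*} [ConditionallyCompleteLinearOrder α]
    [TopologicalSpace α] [OrderTopology α] [DenselyOrdered α] [LinearOrder β] [TopologicalSpace β]
    [OrderClosedTopology β] {g : α → β} {a b : α} {c : β} (hab : a ≤ b)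
    (hcont : ContinuousOn g (Set.Icc a b)) (hmono : MonotoneOn g (Set.Icc a b))
    (ha : g a ≤ c) (hb : c ≤ g b) :
    ∃ x ∈ Set.Icc a b, (∀ y ∈ Set.Icc a x, g y ≤ c) ∧ ∀ y ∈ Set.Icc x b, c ≤ g y := by
  obtain ⟨x, hx, rfl⟩ := intermediate_value_Icc hab hcont ⟨ha, hb⟩
  exact ⟨x, hx, fun y hy => hmono ⟨hy.1, hy.2.trans hx.2⟩ hx hy.2,
    fun y hy => hmono hx ⟨hx.1.trans hy.1, hy.2⟩ hy.1⟩

theorem f_eq_binEntropy (t : ℝ) : f t = Real.binEntropy ((1 + t) / 2) / Real.log 2 - 1 := by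
  have one_sub_half : 1 - (1 + t) * 2⁻¹ = (1 - t) * 2⁻¹ := by ring
  have log_two_ne_zero : Real.log 2 ≠ 0 := (Real.log_pos one_lt_two).ne'
  rw [Real.binEntropy_eq_negMulLog_add_negMulLog_one_sub, div_eq_mul_inv (1 + t), one_sub_half,
    Real.negMulLog_mul, Real.negMulLog_mul]
  simp only [f, Real.negMulLog, Real.logb, Real.log_inv]
  field_simp
  ring

theorem continuous_f : Continuous f := by
  simp only [funext f_eq_binEntropy]
  fun_prop

theorem antitoneOn_f : AntitoneOn f (Set.Icc 0 1) := by
  intro x hx y hy hxy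
  have binEntropy_le : Real.binEntropy ((1 + y) / 2) ≤ Real.binEntropy ((1 + x) / 2) :=
    Real.binEntropy_strictAntiOn.antitoneOn ⟨by linarith [hx.1], by linarith [hx.2]⟩
      ⟨by linarith [hy.1], by linarith [hy.2]⟩ (by linarith)
  rw [f_eq_binEntropy, f_eq_binEntropy]
  gcongr

theorem f_neg (t : ℝ) : f (-t) = f t := by
  simp only [f, sub_neg_eq_add, ← sub_eq_add_neg]
  ring

theorem f_abs (t : ℝ) : f |t| = f t := by
  rcases abs_choice t with h | h <;> simp only [h, f_neg]

theorem f_le_f_mul {c r : ℝ} (hc : |c| ≤ 1) (hr : |r| ≤ 1) : f c ≤ f (c * r) := by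
  have abs_mul_le : |c * r| ≤ |c| :=
    (abs_mul c r).trans_le (mul_le_of_le_one_right (abs_nonneg c) hr)
  simpa only [f_abs] using
    antitoneOn_f ⟨abs_nonneg _, abs_mul_le.trans hc⟩ ⟨abs_nonneg c, hc⟩ abs_mul_le

/-- Length of the Bloch vector `(±(1 - p)² c, 0, r)` of the first qubit of `epsRho p r s c c₂ c₃`,
conditioned on either outcome of a `σ1` measurement of the second qubit. -/
def blochLength (r c p : ℝ) : ℝ := Real.sqrt (r ^ 2 + (1 - p) ^ 4 * c ^ 2)

theorem continuous_blochLength (r c : ℝ) : Continuous (blochLength r c) := by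
  unfold blochLength
  fun_prop

theorem antitoneOn_blochLength (r c : ℝ) : AntitoneOn (blochLength r c) (Set.Iic 1) := by
  intro p _ q hq hpq
  have one_sub_nonneg : 0 ≤ 1 - q := sub_nonneg.2 hq
  unfold blochLength
  gcongr

theorem blochLength_zero_le_one {r c : ℝ} (h : r ^ 2 + c ^ 2 ≤ 1) : blochLength r c 0 ≤ 1 := by
  simpa [blochLength] using h

theorem blochLength_one (r c : ℝ) : blochLength r c 1 = |r| := by
  simp [blochLength, Real.sqrt_sq_eq_abs]

theorem blochLength_mem_Icc {r c p : ℝ} (h : r ^ 2 + c ^ 2 ≤ 1) (hp : p ∈ Set.Icc 0 1) :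
    blochLength r c p ∈ Set.Icc 0 1 :=
  ⟨Real.sqrt_nonneg _,
    (antitoneOn_blochLength r c (Set.mem_Iic.2 zero_le_one) hp.2 hp.1).trans
      (blochLength_zero_le_one h)⟩

/-- The function `S₂(p)` of the informal statement: the entropy of a qubit whose Bloch vector has
length `blochLength r c p`. -/
def S₂ (r c p : ℝ) : ℝ := 1 + f (blochLength r c p)

theorem continuous_S₂ (r c : ℝ) : Continuous (S₂ r c) :=
  continuous_const.add (continuous_f.comp (continuous_blochLength r c))

theorem monotoneOn_S₂ {r c : ℝ} (h : r ^ 2 + c ^ 2 ≤ 1) : MonotoneOn (S₂ r c) (Set.Icc 0 1) :=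
  fun _ hp _ hq hpq => add_le_add_right (antitoneOn_f (blochLength_mem_Icc h hq)
    (blochLength_mem_Icc h hp) (antitoneOn_blochLength r c hp.2 hq.2 hpq)) 1

theorem S₂_one (r c : ℝ) : S₂ r c 1 = 1 + f r := by
  rw [S₂, blochLength_one, f_abs]

/-- if S₂(0) ≤ S₁ then there is a transition point p₀ ∈ [0,1] with
S₂(p) ≤ S₁ before p₀ and S₂(p) ≥ S₁ after p₀. -/
theorem stmt16 (r c1 c3 : ℝ) (hr : |r| < 1) (hc3 : |c3| ≤ 1)
    (hrc : r ^ 2 + c1 ^ 2 ≤ 1)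
    (h0 : 1 + f (Real.sqrt (r ^ 2 + (1 - (0 : ℝ)) ^ 4 * c1 ^ 2)) ≤
      1 + f r + f c3 - f (c3 * r)) :
    ∃ p0 : ℝ, 0 ≤ p0 ∧ p0 ≤ 1 ∧
      (∀ p : ℝ, 0 ≤ p → p ≤ p0 →
        1 + f (Real.sqrt (r ^ 2 + (1 - p) ^ 4 * c1 ^ 2)) ≤
          1 + f r + f c3 - f (c3 * r)) ∧
      (∀ p : ℝ, p0 ≤ p → p ≤ 1 →
        1 + f r + f c3 - f (c3 * r) ≤
          1 + f (Real.sqrt (r ^ 2 + (1 - p) ^ 4 * c1 ^ 2))) := by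
  have h1 : 1 + f r + f c3 - f (c3 * r) ≤ S₂ r c1 1 := by
    linarith [S₂_one r c1, f_le_f_mul hc3 hr.le]
  obtain ⟨p0, hp0, hbefore, hafter⟩ := exists_crossing_of_monotoneOn zero_le_one
    (continuous_S₂ r c1).continuousOn (monotoneOn_S₂ hrc) h0 h1
  exact ⟨p0, hp0.1, hp0.2, fun p hp hpp0 => hbefore p ⟨hp, hpp0⟩,
    fun p hp0p hp => hafter p ⟨hp0p, hp⟩⟩
end
end
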